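/- There exists an absolute constant C (independent of T, a, b, d, f, g, the mesh, and the solution) such that every semidiscrete solution (p_h, m_h) of the inexact Petrov–Galerkin method satisfies, for all 0 ≤ t ≤ T: a‖π_h^{k−1} p_h(t)‖² + b‖π_h^{k−1} m_h(t)‖² ≤ C(1+T) ( a‖π_h^{k−1} p_h(0)‖² + b‖π_h^{k−1} m_h(0)‖² + ∫_0^t [ (1/a)‖π_h^{k−1} f(s)‖² + (1/b)‖π_h^{k−1} g(s)‖² ] ds ). -/

import Mathlib

/-!
The estimate is an energy argument carried out in the Fourier coefficients of `P_{k-1}(T_h)`.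

Let `e_i` be an `L²`-orthonormal basis of `P_{k-1}(T_h)` (`Mesh.exists_fourier`). By Parseval,
`a ‖π p_h‖² + b ‖π m_h‖² = E(t) := a ∑ (p_h, e_i)² + b ∑ (m_h, e_i)²`. Testing the two equations
with the `e_i` gives
`E' = 2 (πf, πp_h) + 2 (πg, πm_h) - 2 [(∂_x m_h, πp_h) + (∂_x p_h, πm_h)] - 2 (d πm_h, πm_h)`.
Since `∂_x m_h` and `∂_x p_h` lie in `P_{k-1}(T_h)`, the projections in the bracket may be dropped,
and it vanishes by integration by parts and the boundary condition on `p_h`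
(`Mesh.integration_by_parts`); the friction term is nonpositive. With
`F = ‖πf‖²/a + ‖πg‖²/b`, Young's inequality with weight `T` yields `E' ≤ T F + E / T`, and
Grönwall's inequality with rate `1/T` (`gronwall_step`) gives `E(t) ≤ e (E(0) + T ∫_0^t F)`.
Hence `C = e` works.

Two points concern regularity. Differentiability in time is assumed pointwise in `x`; it passes to
the moments because a piecewise polynomial is a combination of fixed functions with its nodal
values as coefficients (`Mesh.exists_nodal`, `Mesh.moments_hasDeriv`). The integral of `F` is
meaningful only if `F` is integrable; nothing is assumed on the joint regularity of `f` and `g`,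
but the equations express `πf` and `πg` through the solution, so `F` is continuous on `[0,T]`.
For `πg` this uses that the friction coefficient can be replaced by a measurable one
(`Mesh.exists_regular_coeff`).
-/


open MeasureTheory intervalIntegral Set

noncomputable section

/-- A mesh `x_L = x_0 < x_1 < ⋯ < x_N = x_R` of the interval `[x_L, x_R]`. -/
structure Mesh (xL xR : ℝ) where
  N : ℕ
  Npos : 0 < N
  pt : ℕ → ℝ
  left : pt 0 = xL
  right : pt N = xR
  mono : ∀ n < N, pt n < pt (n + 1)

namespace Mesh

variable {xL xR : ℝ}

/-- The global mesh size `h = max_n (x_n - x_{n-1})`. -/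
def hsize (M : Mesh xL xR) : ℝ :=
  (Finset.range M.N).sup' (Finset.nonempty_range_iff.mpr M.Npos.ne') fun n =>
    M.pt (n + 1) - M.pt n

/-- `v ∈ P_j(T_h)`: on the interior of each element, `v` coincides with a polynomial of
degree at most `j`. -/
def PiecewisePoly (M : Mesh xL xR) (j : ℕ) (v : ℝ → ℝ) : Prop :=
  ∀ n < M.N, ∃ P : Polynomial ℝ, P.natDegree ≤ j ∧
    ∀ x ∈ Set.Ioo (M.pt n) (M.pt (n + 1)), v x = P.eval x

/-- `dv` is the elementwise derivative `∂_x v` of `v`. -/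
def PiecewiseDeriv (M : Mesh xL xR) (v dv : ℝ → ℝ) : Prop :=
  ∀ n < M.N, ∀ x ∈ Set.Ioo (M.pt n) (M.pt (n + 1)), HasDerivAt v (dv x) x

/-- `v` is continuous on `[x_L,x_R]` and piecewise continuously differentiable with
elementwise derivative `dv` (continuous up to the closure of each element). -/
def PiecewiseC1 (M : Mesh xL xR) (v dv : ℝ → ℝ) : Prop :=
  ContinuousOn v (Set.Icc xL xR) ∧ M.PiecewiseDeriv v dv ∧
    ∀ n < M.N, ∃ w : ℝ → ℝ, ContinuousOn w (Set.Icc (M.pt n) (M.pt (n + 1))) ∧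
      Set.EqOn dv w (Set.Ioo (M.pt n) (M.pt (n + 1)))

end Mesh

/-- The `L²(x_L,x_R)` inner product `(v,w) = ∫ v w`. -/
def inner2 (xL xR : ℝ) (v w : ℝ → ℝ) : ℝ := ∫ x in xL..xR, v x * w x

/-- The `L²(x_L,x_R)` norm. -/
def L2norm (xL xR : ℝ) (v : ℝ → ℝ) : ℝ := Real.sqrt (∫ x in xL..xR, v x ^ 2)

/-- `pw = π_h^j w` is the `L²`-orthogonal projection of `w` onto `P_j(T_h)`. -/
def IsL2Proj {xL xR : ℝ} (M : Mesh xL xR) (j : ℕ) (w pw : ℝ → ℝ) : Prop :=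
  M.PiecewisePoly j pw ∧
    ∀ q : ℝ → ℝ, M.PiecewisePoly j q → inner2 xL xR pw q = inner2 xL xR w q

/-- `Iv = I_h^k v` is the interpolant of `v` (with elementwise derivative `dv`):
`Iv` is a continuous piecewise polynomial of degree at most `k` with elementwise
derivative `dIv`, it matches `v` at the mesh points, and `(∂_x Iv, q̃) = (∂_x v, q̃)`
for all `q̃ ∈ P_{k-1}(T_h)`. -/
def IsInterp {xL xR : ℝ} (M : Mesh xL xR) (k : ℕ) (v dv Iv dIv : ℝ → ℝ) : Prop :=
  M.PiecewisePoly k Iv ∧ ContinuousOn Iv (Set.Icc xL xR) ∧ M.PiecewiseDeriv Iv dIv ∧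
    (∀ n ≤ M.N, Iv (M.pt n) = v (M.pt n)) ∧
    ∀ q : ℝ → ℝ, M.PiecewisePoly (k - 1) q → inner2 xL xR dIv q = inner2 xL xR dv q

/-- A semidiscrete solution `(p_h, m_h)` of the inexact Petrov--Galerkin method on `[0,T]`
for the damped linear wave system with coefficients `a`, `b`, friction `d` and data `f`, `g`.
The fields `dtp`, `dtm` are the time derivatives, `dxp`, `dxm` the elementwise spatial
derivatives, and `pim t = π_h^{k-1} (m_h t)`. -/
structure PGSol {xL xR : ℝ} (M : Mesh xL xR) (k : ℕ) (T a b : ℝ)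
    (d : ℝ → ℝ) (f g : ℝ → ℝ → ℝ) where
  p : ℝ → ℝ → ℝ
  m : ℝ → ℝ → ℝ
  dtp : ℝ → ℝ → ℝ
  dtm : ℝ → ℝ → ℝ
  dxp : ℝ → ℝ → ℝ
  dxm : ℝ → ℝ → ℝ
  pim : ℝ → ℝ → ℝ
  p_poly : ∀ t ∈ Set.Icc (0 : ℝ) T, M.PiecewisePoly k (p t)
  p_cont : ∀ t ∈ Set.Icc (0 : ℝ) T, ContinuousOn (p t) (Set.Icc xL xR)
  p_bcL : ∀ t ∈ Set.Icc (0 : ℝ) T, p t xL = 0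
  p_bcR : ∀ t ∈ Set.Icc (0 : ℝ) T, p t xR = 0
  m_poly : ∀ t ∈ Set.Icc (0 : ℝ) T, M.PiecewisePoly k (m t)
  m_cont : ∀ t ∈ Set.Icc (0 : ℝ) T, ContinuousOn (m t) (Set.Icc xL xR)
  dxp_spec : ∀ t ∈ Set.Icc (0 : ℝ) T, M.PiecewiseDeriv (p t) (dxp t)
  dxm_spec : ∀ t ∈ Set.Icc (0 : ℝ) T, M.PiecewiseDeriv (m t) (dxm t)
  dtp_spec : ∀ t ∈ Set.Icc (0 : ℝ) T, ∀ x,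
    HasDerivWithinAt (fun s => p s x) (dtp t x) (Set.Icc (0 : ℝ) T) t
  dtm_spec : ∀ t ∈ Set.Icc (0 : ℝ) T, ∀ x,
    HasDerivWithinAt (fun s => m s x) (dtm t x) (Set.Icc (0 : ℝ) T) t
  dtp_cont : ∀ x, ContinuousOn (fun t => dtp t x) (Set.Icc (0 : ℝ) T)
  dtm_cont : ∀ x, ContinuousOn (fun t => dtm t x) (Set.Icc (0 : ℝ) T)
  pim_spec : ∀ t ∈ Set.Icc (0 : ℝ) T, IsL2Proj M (k - 1) (m t) (pim t)
  eq1 : ∀ t ∈ Set.Icc (0 : ℝ) T, ∀ q : ℝ → ℝ, M.PiecewisePoly (k - 1) q →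
    inner2 xL xR (fun x => a * dtp t x) q + inner2 xL xR (dxm t) q =
      inner2 xL xR (f t) q
  eq2 : ∀ t ∈ Set.Icc (0 : ℝ) T, ∀ v : ℝ → ℝ, M.PiecewisePoly (k - 1) v →
    inner2 xL xR (fun x => b * dtm t x) v + inner2 xL xR (dxp t) v +
      inner2 xL xR (fun x => d x * pim t x) v = inner2 xL xR (g t) v

/-! ### Piecewise polynomials on a mesh -/

namespace Mesh

variable {xL xR : ℝ}

lemma strictMonoOn_pt (M : Mesh xL xR) : StrictMonoOn M.pt (Set.Iic M.N) :=
  strictMonoOn_of_lt_add_one Set.ordConnected_Iic fun n _ _ hn =>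
    M.mono n (Nat.lt_of_succ_le hn)

lemma pt_le_pt (M : Mesh xL xR) {i j : ℕ} (hij : i ≤ j) (hj : j ≤ M.N) : M.pt i ≤ M.pt j :=
  M.strictMonoOn_pt.monotoneOn (hij.trans hj) hj hij

lemma xL_lt_xR (M : Mesh xL xR) : xL < xR := by
  have h := M.strictMonoOn_pt (Set.mem_Iic.2 (Nat.zero_le _)) (Set.mem_Iic.2 le_rfl) M.Npos
  rwa [M.left, M.right] at h

/-- The interior of the `n`-th element (elements are numbered from `0`). -/
def elt (M : Mesh xL xR) (n : ℕ) : Set ℝ := Set.Ioo (M.pt n) (M.pt (n + 1))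

/-- The union of the interiors of all elements. -/
def inside (M : Mesh xL xR) : Set ℝ := {x | ∃ n < M.N, x ∈ M.elt n}

lemma elt_unique (M : Mesh xL xR) {i j : ℕ} (hi : i < M.N) (hj : j < M.N) {x : ℝ}
    (hxi : x ∈ M.elt i) (hxj : x ∈ M.elt j) : i = j := by
  rcases lt_trichotomy i j with h | h | h
  · have := M.pt_le_pt (i := i + 1) (j := j) h hj.le
    linarith [hxi.2, hxj.1]
  · exact h
  · have := M.pt_le_pt (i := j + 1) (j := i) h hi.le
    linarith [hxj.2, hxi.1]

lemma elt_subset (M : Mesh xL xR) {n : ℕ} (hn : n < M.N) : M.elt n ⊆ Set.Ioo xL xR := by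
  intro x hx
  have h1 := M.pt_le_pt (Nat.zero_le n) hn.le
  have h2 := M.pt_le_pt (i := n + 1) (j := M.N) hn le_rfl
  rw [M.left] at h1
  rw [M.right] at h2
  exact ⟨h1.trans_lt hx.1, hx.2.trans_le h2⟩

lemma mem_inside_or (M : Mesh xL xR) {x : ℝ} (hx : x ∈ Set.Ioc xL xR) :
    x ∈ M.inside ∨ x ∈ Set.range M.pt := by
  have key : ∀ n ≤ M.N, x ≤ M.pt n → x ∈ M.inside ∨ x ∈ Set.range M.pt := by
    intro n
    induction n with
    | zero =>
      intro _ h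
      rw [M.left] at h
      exact absurd hx.1 (not_lt.2 h)
    | succ n ih =>
      intro hn h
      by_cases h' : x ≤ M.pt n
      · exact ih (by omega) h'
      · rcases h.lt_or_eq with h2 | h2
        · exact Or.inl ⟨n, by omega, not_le.1 h', h2⟩
        · exact Or.inr ⟨n + 1, h2.symm⟩
  exact key M.N le_rfl (by rw [M.right]; exact hx.2)

/-- Lebesgue measure on `(x_L, x_R]`, the measure underlying the interval integrals. -/
def μ (_ : Mesh xL xR) : Measure ℝ := volume.restrict (Set.Ioc xL xR)

instance (M : Mesh xL xR) : IsFiniteMeasure M.μ := by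
  unfold μ; infer_instance

lemma inner2_eq (M : Mesh xL xR) (v w : ℝ → ℝ) : inner2 xL xR v w = ∫ x, v x * w x ∂M.μ := by
  rw [inner2, intervalIntegral.integral_of_le M.xL_lt_xR.le, μ]

lemma ae_inside (M : Mesh xL xR) : ∀ᵐ x ∂M.μ, x ∈ M.inside := by
  have h1 : ∀ᵐ x ∂M.μ, x ∈ Set.Ioc xL xR := ae_restrict_mem measurableSet_Ioc
  have h2 : ∀ᵐ x ∂M.μ, x ∉ Set.range M.pt :=
    ae_restrict_of_ae ((Set.countable_range M.pt).ae_notMem volume)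
  filter_upwards [h1, h2] with x hx hx'
  exact (M.mem_inside_or hx).resolve_right hx'

lemma isOpen_elt (M : Mesh xL xR) (n : ℕ) : IsOpen (M.elt n) := isOpen_Ioo

lemma measurableSet_elt (M : Mesh xL xR) (n : ℕ) : MeasurableSet (M.elt n) := measurableSet_Ioo

lemma μ_restrict_elt (M : Mesh xL xR) {n : ℕ} (hn : n < M.N) :
    M.μ.restrict (M.elt n) = volume.restrict (M.elt n) := by
  rw [μ, Measure.restrict_restrict (M.measurableSet_elt n), Set.inter_eq_left.2]
  exact (M.elt_subset hn).trans Set.Ioo_subset_Ioc_self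

namespace PiecewisePoly

variable {M : Mesh xL xR} {i j : ℕ} {v w : ℝ → ℝ}

lemma add (hv : M.PiecewisePoly j v) (hw : M.PiecewisePoly j w) :
    M.PiecewisePoly j (fun x => v x + w x) := by
  intro n hn
  obtain ⟨P, hP, hPe⟩ := hv n hn
  obtain ⟨Q, hQ, hQe⟩ := hw n hn
  refine ⟨P + Q, (Polynomial.natDegree_add_le P Q).trans (max_le hP hQ), fun x hx => ?_⟩
  simp [hPe x hx, hQe x hx]

lemma mul (hv : M.PiecewisePoly i v) (hw : M.PiecewisePoly j w) :
    M.PiecewisePoly (i + j) (fun x => v x * w x) := by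
  intro n hn
  obtain ⟨P, hP, hPe⟩ := hv n hn
  obtain ⟨Q, hQ, hQe⟩ := hw n hn
  refine ⟨P * Q, Polynomial.natDegree_mul_le.trans (add_le_add hP hQ), fun x hx => ?_⟩
  simp [hPe x hx, hQe x hx]

lemma const (M : Mesh xL xR) (j : ℕ) (c : ℝ) : M.PiecewisePoly j (fun _ => c) :=
  fun _ _ => ⟨Polynomial.C c, by simp, by simp⟩

lemma const_mul (hv : M.PiecewisePoly j v) (c : ℝ) : M.PiecewisePoly j (fun x => c * v x) := by
  simpa using (const M 0 c).mul hv

lemma sum {ι : Type*} (s : Finset ι) {u : ι → ℝ → ℝ} (hu : ∀ a ∈ s, M.PiecewisePoly j (u a)) :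
    M.PiecewisePoly j (fun x => ∑ a ∈ s, u a x) := by
  classical
  induction s using Finset.induction_on with
  | empty => simpa using const M j 0
  | insert a s ha ih =>
    simp only [Finset.sum_insert ha]
    exact (hu a (Finset.mem_insert_self a s)).add
      (ih fun b hb => hu b (Finset.mem_insert_of_mem hb))

lemma memLp_top (hv : M.PiecewisePoly j v) : MemLp v ⊤ M.μ := by
  choose! P _ hP using hv
  have h1 : v =ᵐ[M.μ] fun x => ∑ n ∈ Finset.range M.N,
      (M.elt n).indicator (fun y => (P n).eval y) x := by
    filter_upwards [M.ae_inside] with x ⟨n, hn, hx⟩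
    rw [Finset.sum_eq_single n]
    · rw [Set.indicator_of_mem hx, hP n hn x hx]
    · intro m hm hmn
      exact Set.indicator_of_notMem
        (fun h => hmn (M.elt_unique (Finset.mem_range.1 hm) hn h hx)) _
    · intro h
      exact absurd (Finset.mem_range.2 hn) h
  refine (memLp_congr_ae h1).2 (memLp_finsetSum _ fun n _ => ?_)
  obtain ⟨B, hB⟩ := (isCompact_Icc (a := M.pt n) (b := M.pt (n + 1))).exists_bound_of_continuousOn
    (P n).continuous.continuousOn
  refine memLp_top_of_bound
    ((P n).continuous.aestronglyMeasurable.indicator (M.measurableSet_elt n)) (max B 0)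
    (Filter.Eventually.of_forall fun x => ?_)
  by_cases hx : x ∈ M.elt n
  · rw [Set.indicator_of_mem hx]
    exact (hB x (Set.Ioo_subset_Icc_self hx)).trans (le_max_left _ _)
  · rw [Set.indicator_of_notMem hx]
    simp

lemma integrable (hv : M.PiecewisePoly j v) : Integrable v M.μ := hv.memLp_top.integrable le_top

lemma integrable_mul (hv : M.PiecewisePoly i v) (hw : M.PiecewisePoly j w) :
    Integrable (fun x => v x * w x) M.μ := (hv.mul hw).integrable

/-- The elementwise derivative lowers the degree by one. -/
lemma deriv {dv : ℝ → ℝ} (hv : M.PiecewisePoly j v) (hd : M.PiecewiseDeriv v dv) :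
    M.PiecewisePoly (j - 1) dv := by
  intro n hn
  obtain ⟨P, hP, hPe⟩ := hv n hn
  refine ⟨P.derivative, (Polynomial.natDegree_derivative_le P).trans
    (Nat.sub_le_sub_right hP 1), fun x hx => ?_⟩
  refine (hd n hn x hx).unique ((P.hasDerivAt x).congr_of_eventuallyEq ?_)
  filter_upwards [(M.isOpen_elt n).mem_nhds hx] with y hy using hPe y hy

end PiecewisePoly

/-- A finite Lagrange-type family: finitely many nodes `y` (depending only on the mesh and
the degree) and basis functions `φ` with elementwise derivatives `φ'`, such that every
piecewise polynomial is, inside the elements, the combination of the `φ i` whose coefficients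
are its nodal values. -/
lemma exists_nodal (M : Mesh xL xR) (j : ℕ) :
    ∃ (y : Fin M.N × Fin (j + 1) → ℝ) (φ φ' : Fin M.N × Fin (j + 1) → ℝ → ℝ),
      (∀ i, y i ∈ M.inside) ∧
      (∀ i, M.PiecewisePoly j (φ i)) ∧ (∀ i, M.PiecewiseDeriv (φ i) (φ' i)) ∧
      ∀ v, M.PiecewisePoly j v → ∀ x ∈ M.inside, v x = ∑ i, v (y i) * φ i x := by
  classical
  -- equispaced interior nodes
  let y : ℕ → Fin (j + 1) → ℝ := fun n i =>
    M.pt n + ((i : ℝ) + 1) / (j + 2) * (M.pt (n + 1) - M.pt n)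
  let L : ℕ → Fin (j + 1) → Polynomial ℝ := fun n i => Lagrange.basis Finset.univ (y n) i
  have hj : (0 : ℝ) < j + 2 := by positivity
  have hy : ∀ n < M.N, ∀ i, y n i ∈ M.elt n := by
    intro n hn i
    have h := sub_pos.2 (M.mono n hn)
    have hi : (i : ℝ) + 1 < j + 2 := by
      have : (i : ℕ) + 1 < j + 2 := by omega
      exact_mod_cast this
    have h0 : 0 < ((i : ℝ) + 1) / (j + 2) := by positivity
    have h1 : ((i : ℝ) + 1) / (j + 2) < 1 := (div_lt_one hj).2 hi
    constructor
    · have := mul_pos h0 h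
      simp only [y]; linarith
    · have := mul_lt_mul_of_pos_right h1 h
      simp only [y]; linarith
  have hinj : ∀ n < M.N, Set.InjOn (y n) (Finset.univ : Finset (Fin (j + 1))) := by
    intro n hn i _ i' _ h
    have h' := (sub_pos.2 (M.mono n hn)).ne'
    simp only [y, add_right_inj] at h
    have h2 := mul_right_cancel₀ h' h
    have h3 : (i : ℝ) + 1 = i' + 1 := by
      rwa [div_left_inj' hj.ne'] at h2
    have h4 : (i : ℝ) = i' := by linarith
    exact Fin.ext (by exact_mod_cast h4)
  have hval : ∀ (n : Fin M.N) (i : Fin (j + 1)) (n' : ℕ), n' < M.N → ∀ x ∈ M.elt n',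
      (M.elt n).indicator (fun z => (L n i).eval z) x
        = if n' = (n : ℕ) then (L n i).eval x else 0 := by
    intro n i n' hn' x hx
    split_ifs with h
    · rw [Set.indicator_of_mem (h ▸ hx)]
    · exact Set.indicator_of_notMem (fun h2 => h (M.elt_unique hn' n.2 hx h2)) _
  refine ⟨fun a => y a.1 a.2, fun a => (M.elt a.1).indicator fun x => (L a.1 a.2).eval x,
    fun a => (M.elt a.1).indicator fun x => (L a.1 a.2).derivative.eval x,
    fun a => ⟨a.1, a.1.2, hy _ a.1.2 _⟩, ?_, ?_, ?_⟩
  · rintro ⟨n, i⟩ n' hn'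
    by_cases h : n' = n
    · refine ⟨L n i, ?_, fun x hx => ?_⟩
      · rw [Lagrange.natDegree_basis (hinj n n.2) (Finset.mem_univ i)]
        simp
      · exact (hval n i n' hn' x hx).trans (if_pos h)
    · refine ⟨0, by simp, fun x hx => ?_⟩
      exact (hval n i n' hn' x hx).trans (by rw [if_neg h]; simp)
  · rintro ⟨n, i⟩ n' hn' x hx
    by_cases h : n' = n
    · have hx' : x ∈ M.elt n := h ▸ hx
      simp only
      rw [Set.indicator_of_mem hx']
      refine ((L n i).hasDerivAt x).congr_of_eventuallyEq ?_
      filter_upwards [(M.isOpen_elt n).mem_nhds hx'] with z hz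
      rw [Set.indicator_of_mem hz]
    · have hd : ∀ z ∈ M.elt n', z ∉ M.elt n := fun z hz hz' => h (M.elt_unique hn' n.2 hz hz')
      simp only
      rw [Set.indicator_of_notMem (hd x hx)]
      refine (hasDerivAt_const x (0 : ℝ)).congr_of_eventuallyEq ?_
      filter_upwards [(M.isOpen_elt n').mem_nhds hx] with z hz
      rw [Set.indicator_of_notMem (hd z hz)]
  · rintro v hv x ⟨n, hn, hx⟩
    obtain ⟨P, hP, hPe⟩ := hv n hn
    have hPi : P = Lagrange.interpolate Finset.univ (y n) fun i => P.eval (y n i) := by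
      refine Lagrange.eq_interpolate (hinj n hn) ?_
      rw [Finset.card_univ, Fintype.card_fin]
      refine lt_of_le_of_lt Polynomial.degree_le_natDegree ?_
      exact_mod_cast Nat.lt_succ_of_le hP
    rw [Fintype.sum_prod_type, Finset.sum_eq_single ⟨n, hn⟩]
    · rw [hPe x hx, hPi, Lagrange.interpolate_apply, Polynomial.eval_finsetSum]
      refine Finset.sum_congr rfl fun i _ => ?_
      beta_reduce
      rw [hval ⟨n, hn⟩ i n hn x hx, if_pos rfl, hPe _ (hy n hn i)]
      simp [L]
    · intro n' _ hne
      refine Finset.sum_eq_zero fun i _ => ?_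
      beta_reduce
      rw [hval n' i n hn x hx, if_neg fun h => hne (Fin.ext h.symm), mul_zero]
    · simp

lemma PiecewiseDeriv.sum {M : Mesh xL xR} {ι : Type*} {s : Finset ι} {c : ι → ℝ}
    {φ φ' : ι → ℝ → ℝ} (hφ : ∀ i, M.PiecewiseDeriv (φ i) (φ' i)) :
    M.PiecewiseDeriv (fun x => ∑ i ∈ s, c i * φ i x) (fun x => ∑ i ∈ s, c i * φ' i x) :=
  fun n hn x hx => HasDerivAt.fun_sum fun i _ => (hφ i n hn x hx).const_mul (c i)

lemma PiecewiseDeriv.unique {M : Mesh xL xR} {v w dv dw : ℝ → ℝ} (hv : M.PiecewiseDeriv v dv)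
    (hw : M.PiecewiseDeriv w dw) (h : ∀ x ∈ M.inside, v x = w x) :
    ∀ x ∈ M.inside, dv x = dw x := by
  rintro x ⟨n, hn, hx⟩
  refine (hv n hn x hx).unique ((hw n hn x hx).congr_of_eventuallyEq ?_)
  filter_upwards [(M.isOpen_elt n).mem_nhds hx] with y hy using h y ⟨n, hn, hy⟩

lemma inner2_congr {M : Mesh xL xR} {v v' w w' : ℝ → ℝ} (hv : v =ᵐ[M.μ] v') (hw : w =ᵐ[M.μ] w') :
    inner2 xL xR v w = inner2 xL xR v' w' := by
  rw [M.inner2_eq, M.inner2_eq]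
  refine integral_congr_ae ?_
  filter_upwards [hv, hw] with x h1 h2
  rw [h1, h2]

lemma inner2_sum_left {M : Mesh xL xR} {ι : Type*} [Fintype ι] (c : ι → ℝ) {φ : ι → ℝ → ℝ}
    {v w : ℝ → ℝ} (hv : v =ᵐ[M.μ] fun x => ∑ i, c i * φ i x)
    (hi : ∀ i, Integrable (fun x => φ i x * w x) M.μ) :
    inner2 xL xR v w = ∑ i, c i * inner2 xL xR (φ i) w := by
  rw [inner2_congr hv (Filter.EventuallyEq.refl _ w), M.inner2_eq]
  simp_rw [M.inner2_eq, ← MeasureTheory.integral_const_mul]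
  rw [← MeasureTheory.integral_finsetSum _ fun i _ => (hi i).const_mul (c i)]
  simp_rw [Finset.sum_mul, mul_assoc]

lemma inner2_comm (v w : ℝ → ℝ) : inner2 xL xR v w = inner2 xL xR w v := by
  simp only [inner2, mul_comm]

lemma coeFn_lin_comb {ι : Type*} {ν : Measure ℝ} (s : Finset ι) (c : ι → ℝ) (u : ι → Lp ℝ 2 ν) :
    ((∑ i ∈ s, c i • u i : Lp ℝ 2 ν) : ℝ → ℝ) =ᵐ[ν] fun x => ∑ i ∈ s, c i * u i x := by
  classical
  induction s using Finset.induction_on with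
  | empty =>
    simp only [Finset.sum_empty]
    exact Lp.coeFn_zero ℝ 2 ν
  | insert a s ha ih =>
    rw [Finset.sum_insert ha]
    filter_upwards [Lp.coeFn_add (c a • u a) (∑ i ∈ s, c i • u i), Lp.coeFn_smul (c a) (u a),
      ih] with x h1 h2 h3
    rw [h1, Pi.add_apply, h2, h3, Finset.sum_insert ha]
    simp

/-- `P_j(T_h)` has a finite `L²`-orthonormal basis `e`, recorded through its Fourier expansion
`v = ∑ (v, e_i) e_i`. -/
lemma exists_fourier (M : Mesh xL xR) (j : ℕ) :
    ∃ (r : ℕ) (e : Fin r → ℝ → ℝ), (∀ i, M.PiecewisePoly j (e i)) ∧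
      ∀ v, M.PiecewisePoly j v → v =ᵐ[M.μ] fun x => ∑ i, inner2 xL xR v (e i) * e i x := by
  classical
  obtain ⟨y, φ, -, -, hφ, -, hrep⟩ := M.exists_nodal j
  have hm : ∀ {v}, M.PiecewisePoly j v → MemLp v 2 M.μ := fun hv => hv.memLp_top.mono_exponent le_top
  let ψ : Fin M.N × Fin (j + 1) → Lp ℝ 2 M.μ := fun i => (hm (hφ i)).toLp (φ i)
  let W : Submodule ℝ (Lp ℝ 2 M.μ) := Submodule.span ℝ (Set.range ψ)
  have hcomb : ∀ c : Fin M.N × Fin (j + 1) → ℝ,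
      ((∑ i, c i • ψ i : Lp ℝ 2 M.μ) : ℝ → ℝ) =ᵐ[M.μ] fun x => ∑ i, c i * φ i x := by
    intro c
    have h : ∀ᵐ x ∂M.μ, ∀ i, ψ i x = φ i x := ae_all_iff.2 fun i => (hm (hφ i)).coeFn_toLp
    filter_upwards [coeFn_lin_comb Finset.univ c ψ, h] with x h1 h2
    simp only [h1, h2]
  have : FiniteDimensional ℝ W := FiniteDimensional.span_of_finite ℝ (Set.finite_range ψ)
  let B := stdOrthonormalBasis ℝ W
  have hB : ∀ i, ∃ c : Fin M.N × Fin (j + 1) → ℝ, ∑ a, c a • ψ a = (B i : Lp ℝ 2 M.μ) :=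
    fun i => (Submodule.mem_span_range_iff_exists_fun ℝ).1 (B i).2
  choose c hc using hB
  have he : ∀ i, ((B i : Lp ℝ 2 M.μ) : ℝ → ℝ) =ᵐ[M.μ] fun x => ∑ a, c i a * φ a x := by
    intro i
    rw [← hc i]
    exact hcomb (c i)
  refine ⟨_, fun i x => ∑ a, c i a * φ a x,
    fun i => PiecewisePoly.sum _ fun a _ => (hφ a).const_mul _, fun v hv => ?_⟩
  have hvW : (hm hv).toLp v ∈ W := by
    have : (hm hv).toLp v = ∑ a, v (y a) • ψ a := by
      refine Lp.ext ?_
      filter_upwards [(hm hv).coeFn_toLp, hcomb fun a => v (y a), M.ae_inside] with x h1 h2 h3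
      rw [h1, h2, hrep v hv x h3]
    rw [this]
    exact Submodule.sum_mem _ fun a _ => Submodule.smul_mem _ _ (Submodule.subset_span ⟨a, rfl⟩)
  have hsum := congrArg (Subtype.val) (B.sum_repr' ⟨_, hvW⟩)
  simp only [Submodule.coe_sum, Submodule.coe_smul] at hsum
  have hin : ∀ i, inner ℝ (B i) (⟨_, hvW⟩ : W)
      = inner2 xL xR v (fun x => ∑ a, c i a * φ a x) := by
    intro i
    rw [Submodule.coe_inner, L2.inner_def, M.inner2_eq]
    refine integral_congr_ae ?_
    filter_upwards [(hm hv).coeFn_toLp, he i] with x h1 h2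
    simp only [h1, h2]
    simp
  have h0 := coeFn_lin_comb (ν := M.μ) Finset.univ
    (fun i => inner ℝ (B i) (⟨_, hvW⟩ : W)) fun i => (B i : Lp ℝ 2 M.μ)
  rw [hsum] at h0
  filter_upwards [(hm hv).coeFn_toLp, h0, ae_all_iff.2 he] with x h1 h2 h3
  rw [← h1, h2]
  exact Finset.sum_congr rfl fun i _ => by rw [hin i, h3 i]

end Mesh
/-! ### The friction term for a coefficient that need not be measurable -/

namespace Mesh

variable {xL xR : ℝ}

/-- Dividing by a nonzero polynomial preserves measurability on an element. -/
lemma aesm_of_mul_poly (M : Mesh xL xR) {n : ℕ} {d : ℝ → ℝ} {P : Polynomial ℝ} (hP : P ≠ 0)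
    (h : AEStronglyMeasurable (fun x => d x * P.eval x) (volume.restrict (M.elt n))) :
    AEStronglyMeasurable d (volume.restrict (M.elt n)) := by
  have h1 : AEStronglyMeasurable (fun x => (d x * P.eval x) * (P.eval x)⁻¹)
      (volume.restrict (M.elt n)) :=
    h.mul P.continuous.measurable.inv.aestronglyMeasurable
  refine h1.congr ?_
  have h2 : ∀ᵐ x ∂(volume.restrict (M.elt n)), x ∉ (P.roots.toFinset : Set ℝ) :=
    ae_restrict_of_ae ((Finset.countable_toSet _).ae_notMem volume)
  filter_upwards [h2] with x hx
  have hx' : P.eval x ≠ 0 := by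
    intro h0
    exact hx (by simpa [hP] using h0)
  field_simp

/-- The almost everywhere bounds do not make `d` measurable, so `(d w, v)` may be the integral of a
non-integrable function, with value `0`. Let `d'` be `d` on the elements where it is measurable
and `0` on the others. Whenever `v ↦ (d w, v)` is additive on `P_j(T_h)`, which the scheme
forces, it coincides with `v ↦ (d' w, v)`: if `d w` is not measurable then some element carries
neither measurability of `d` nor `w = 0`, every `(d w, v)` vanishes, and testing with `w` cut off
to the good elements gives `d' w = 0`. -/
lemma exists_regular_coeff (M : Mesh xL xR) {d : ℝ → ℝ} {d_min d_max : ℝ} (h0 : 0 < d_min)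
    (hd : ∀ᵐ x ∂(volume.restrict (Set.Ioo xL xR)), d_min ≤ d x ∧ d x ≤ d_max) :
    ∃ d' : ℝ → ℝ, MemLp d' ⊤ M.μ ∧ (∀ᵐ x ∂M.μ, 0 ≤ d' x) ∧
      ∀ j w, M.PiecewisePoly j w →
        (∀ v v', M.PiecewisePoly j v → M.PiecewisePoly j v' →
          inner2 xL xR (fun x => d x * w x) (fun x => v x + v' x) =
            inner2 xL xR (fun x => d x * w x) v + inner2 xL xR (fun x => d x * w x) v') →
        ∀ v, M.PiecewisePoly j v →
          inner2 xL xR (fun x => d x * w x) v = inner2 xL xR (fun x => d' x * w x) v := by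
  classical
  have hdμ : ∀ᵐ x ∂M.μ, d_min ≤ d x ∧ d x ≤ d_max := by
    rw [μ, ← Measure.restrict_congr_set Ioo_ae_eq_Ioc]
    exact hd
  let good : ℕ → Prop := fun n => AEStronglyMeasurable d (volume.restrict (M.elt n))
  let G : Set ℝ := {x | ∃ n < M.N, good n ∧ x ∈ M.elt n}
  have hG : G = ⋃ n : {n : ℕ // n < M.N ∧ good n}, M.elt n := by
    ext x
    simp only [G, Set.mem_ofPred_eq, Set.mem_iUnion, Subtype.exists, exists_prop, and_assoc]
  have hGm : MeasurableSet G := by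
    rw [hG]
    exact MeasurableSet.iUnion fun n => M.measurableSet_elt n
  have hGmem : ∀ n < M.N, ∀ x ∈ M.elt n, (x ∈ G ↔ good n) := by
    intro n hn x hx
    constructor
    · rintro ⟨n', hn', hg, hx'⟩
      rwa [M.elt_unique hn hn' hx hx']
    · exact fun hg => ⟨n, hn, hg, hx⟩
  let d' : ℝ → ℝ := G.indicator d
  have hd'm : AEStronglyMeasurable d' M.μ := by
    rw [aestronglyMeasurable_indicator_iff hGm, hG, aestronglyMeasurable_iUnion_iff]
    intro n
    rw [M.μ_restrict_elt n.2.1]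
    exact n.2.2
  have hd'top : MemLp d' ⊤ M.μ := by
    refine memLp_top_of_bound hd'm d_max ?_
    filter_upwards [hdμ] with x hx
    by_cases hxG : x ∈ G
    · simp only [d', Set.indicator_of_mem hxG, Real.norm_eq_abs]
      rw [abs_of_pos (h0.trans_le hx.1)]
      exact hx.2
    · simp only [d', Set.indicator_of_notMem hxG, norm_zero]
      linarith [hx.1, hx.2]
  have hd'0 : ∀ᵐ x ∂M.μ, 0 ≤ d' x := by
    filter_upwards [hdμ] with x hx
    exact Set.indicator_apply_nonneg fun _ => (h0.trans_le hx.1).le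
  refine ⟨d', hd'top, hd'0, fun j w hw hadd v hv => ?_⟩
  by_cases hreg : ∀ n < M.N, good n ∨ ∀ x ∈ M.elt n, w x = 0
  · refine inner2_congr (M := M) ?_ (Filter.EventuallyEq.refl _ v)
    filter_upwards [M.ae_inside] with x ⟨n, hn, hx⟩
    rcases hreg n hn with h | h
    · simp only [d', Set.indicator_of_mem ((hGmem n hn x hx).2 h)]
    · rw [h x hx, mul_zero, mul_zero]
  · push Not at hreg
    obtain ⟨n, hn, hbad, x₀, hx₀, hwx₀⟩ := hreg
    obtain ⟨P, -, hP⟩ := hw n hn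
    have hP0 : P ≠ 0 := by
      rintro rfl
      exact hwx₀ (by simpa using hP x₀ hx₀)
    have hzero' : ∀ q, M.PiecewisePoly j q → (∃ x ∈ M.elt n, q x ≠ 0) →
        inner2 xL xR (fun x => d x * w x) q = 0 := by
      rintro q hq ⟨x, hx, hqx⟩
      obtain ⟨Q, -, hQ⟩ := hq n hn
      have hQ0 : Q ≠ 0 := by
        rintro rfl
        exact hqx (by simpa using hQ x hx)
      rw [M.inner2_eq]
      refine integral_undef fun hint => hbad ?_
      refine M.aesm_of_mul_poly (mul_ne_zero hP0 hQ0) ?_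
      have h1 := hint.aestronglyMeasurable.restrict (s := M.elt n)
      rw [M.μ_restrict_elt hn] at h1
      refine h1.congr ?_
      filter_upwards [ae_restrict_mem (M.measurableSet_elt n)] with z hz
      rw [hP z hz, hQ z hz, Polynomial.eval_mul, mul_assoc]
    have hzero : ∀ q, M.PiecewisePoly j q → inner2 xL xR (fun x => d x * w x) q = 0 := by
      intro q hq
      by_cases hq0 : ∃ x ∈ M.elt n, q x ≠ 0
      · exact hzero' q hq hq0
      · push Not at hq0
        -- `q` vanishes on the bad element, whereas `1` and `q + 1` do not
        have h1 := PiecewisePoly.const M j 1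
        have h2 := hadd q _ hq h1
        rw [hzero' _ h1 ⟨x₀, hx₀, one_ne_zero⟩,
          hzero' _ (hq.add h1) ⟨x₀, hx₀, by rw [hq0 x₀ hx₀]; norm_num⟩] at h2
        linarith
    rw [hzero v hv]
    have hcut : M.PiecewisePoly j (G.indicator w) := by
      intro m hm
      by_cases hg : good m
      · obtain ⟨R, hR, hRe⟩ := hw m hm
        exact ⟨R, hR, fun x hx => by
          rw [Set.indicator_of_mem ((hGmem m hm x hx).2 hg), hRe x hx]⟩
      · exact ⟨0, by simp, fun x hx => by
          rw [Set.indicator_of_notMem fun h => hg ((hGmem m hm x hx).1 h)]; simp⟩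
    have h1 := hzero _ hcut
    have h2 : (fun x => (d x * w x) * G.indicator w x) = fun x => d' x * (w x * w x) := by
      funext x
      by_cases hx : x ∈ G
      · simp only [d', Set.indicator_of_mem hx]; ring
      · simp only [d', Set.indicator_of_notMem hx]; ring
    rw [M.inner2_eq, h2, MeasureTheory.integral_eq_zero_iff_of_nonneg_ae] at h1
    · rw [M.inner2_eq]
      refine (integral_eq_zero_of_ae ?_).symm
      filter_upwards [h1] with x hx
      simp only [Pi.zero_apply, mul_eq_zero, or_self] at hx ⊢
      exact Or.inl hx
    · filter_upwards [hd'0] with x hx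
      exact mul_nonneg hx (mul_self_nonneg _)
    · exact (hd'top.mul (hw.mul hw).memLp_top (r := ⊤)).integrable le_top |>.congr
        (Filter.Eventually.of_forall fun x => by simp [mul_comm])

end Mesh

/-! ### The Grönwall step -/

/-- Grönwall's inequality on `[0,T]` with rate `1/T`, so that the exponential factor is at
most `e`. -/
lemma gronwall_step {T : ℝ} (hT : 0 < T) {E E' F : ℝ → ℝ}
    (hE : ∀ t ∈ Set.Icc 0 T, HasDerivWithinAt E (E' t) (Set.Icc 0 T) t)
    (hF : ContinuousOn F (Set.Icc 0 T)) (hF0 : ∀ t, 0 ≤ F t) (hE0 : 0 ≤ E 0)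
    (hle : ∀ t ∈ Set.Icc 0 T, E' t ≤ T * F t + E t / T) {t : ℝ} (ht : t ∈ Set.Icc 0 T) :
    E t ≤ Real.exp 1 * (E 0 + T * ∫ s in (0 : ℝ)..t, F s) := by
  have hexp : ∀ s, HasDerivAt (fun s => Real.exp (-s / T)) (Real.exp (-s / T) * (-1 / T)) s :=
    fun s => ((hasDerivAt_id s).neg.div_const T).exp
  have hsub : Set.Icc 0 t ⊆ Set.Icc 0 T := Set.Icc_subset_Icc_right ht.2
  have hder : ∀ s ∈ Set.Icc 0 T, HasDerivWithinAt (fun s => Real.exp (-s / T) * E s)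
      (Real.exp (-s / T) * (-1 / T) * E s + Real.exp (-s / T) * E' s) (Set.Icc 0 T) s :=
    fun s hs => (hexp s).hasDerivWithinAt.mul (hE s hs)
  have key := sub_le_integral_of_hasDeriv_right_of_le (φ := fun s => T * F s) ht.1
    (fun s hs => ((hder s (hsub hs)).continuousWithinAt.mono hsub))
    (fun s hs => ((hder s (hsub (Set.Ioo_subset_Icc_self hs))).hasDerivAt
      (Icc_mem_nhds hs.1 (hs.2.trans_le ht.2))).hasDerivWithinAt)
    ((continuousOn_const.mul (hF.mono hsub)).integrableOn_Icc) ?_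
  · rw [intervalIntegral.integral_const_mul] at key
    simp only [neg_zero, zero_div, Real.exp_zero, one_mul] at key
    have hI : 0 ≤ ∫ s in (0 : ℝ)..t, F s :=
      intervalIntegral.integral_nonneg ht.1 fun s _ => hF0 s
    have h1 : E t = Real.exp (t / T) * (Real.exp (-t / T) * E t) := by
      rw [← mul_assoc, ← Real.exp_add]
      simp [neg_div]
    have h2 : Real.exp (t / T) ≤ Real.exp 1 := Real.exp_le_exp.2 ((div_le_one hT).2 ht.2)
    rw [h1]
    calc Real.exp (t / T) * (Real.exp (-t / T) * E t)
        ≤ Real.exp (t / T) * (E 0 + T * ∫ s in (0 : ℝ)..t, F s) := by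
          gcongr; linarith
      _ ≤ _ := by gcongr
  · intro s hs
    have hs' := hsub (Set.Ioo_subset_Icc_self hs)
    have h1 : Real.exp (-s / T) ≤ 1 := by
      rw [Real.exp_le_one_iff]
      exact div_nonpos_of_nonpos_of_nonneg (by linarith [hs.1]) hT.le
    have h2 := hle s hs'
    calc Real.exp (-s / T) * (-1 / T) * E s + Real.exp (-s / T) * E' s
        = Real.exp (-s / T) * (E' s - E s / T) := by ring
      _ ≤ Real.exp (-s / T) * (T * F s) := by gcongr; linarith
      _ ≤ 1 * (T * F s) := by
          have := hF0 s
          gcongr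
      _ = T * F s := one_mul _

/-! ### Regularity in time of the moments of the discrete solution -/

namespace Mesh

variable {xL xR : ℝ}

lemma PiecewisePoly.congr {M : Mesh xL xR} {j : ℕ} {v w : ℝ → ℝ} (hw : M.PiecewisePoly j w)
    (h : ∀ x ∈ M.inside, v x = w x) : M.PiecewisePoly j v := by
  intro n hn
  obtain ⟨P, hP, hPe⟩ := hw n hn
  exact ⟨P, hP, fun x hx => (h x ⟨n, hn, hx⟩).trans (hPe x hx)⟩

lemma ae_of_inside {M : Mesh xL xR} {v w : ℝ → ℝ} (h : ∀ x ∈ M.inside, v x = w x) :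
    v =ᵐ[M.μ] w := by
  filter_upwards [M.ae_inside] with x hx using h x hx

/-- A curve of piecewise polynomials is a finite combination of fixed functions with the nodal
values as coefficients, so pointwise differentiability in time yields differentiability of all
moments. -/
lemma moments_hasDeriv (M : Mesh xL xR) {k : ℕ} {T : ℝ} (hT : 0 < T) {u du : ℝ → ℝ → ℝ}
    (hu : ∀ t ∈ Set.Icc 0 T, M.PiecewisePoly k (u t))
    (hdu : ∀ t ∈ Set.Icc 0 T, ∀ x,
      HasDerivWithinAt (fun s => u s x) (du t x) (Set.Icc 0 T) t)
    (hc : ∀ x, ContinuousOn (fun t => du t x) (Set.Icc 0 T)) :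
    (∀ t ∈ Set.Icc 0 T, M.PiecewisePoly k (du t)) ∧
    ∀ {j : ℕ} {q : ℝ → ℝ}, M.PiecewisePoly j q →
      (∀ t ∈ Set.Icc 0 T, HasDerivWithinAt (fun s => inner2 xL xR (u s) q)
        (inner2 xL xR (du t) q) (Set.Icc 0 T) t) ∧
      ContinuousOn (fun t => inner2 xL xR (du t) q) (Set.Icc 0 T) := by
  obtain ⟨y, φ, -, -, hφ, -, hrep⟩ := M.exists_nodal k
  have hrepd : ∀ t ∈ Set.Icc 0 T, ∀ x ∈ M.inside, du t x = ∑ i, du t (y i) * φ i x := by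
    intro t ht x hx
    have h1 : HasDerivWithinAt (fun s => ∑ i, u s (y i) * φ i x)
        (∑ i, du t (y i) * φ i x) (Set.Icc 0 T) t :=
      HasDerivWithinAt.fun_sum fun i _ => (hdu t ht (y i)).mul_const (φ i x)
    have h2 := h1.congr (f₁ := fun s => u s x) (fun s hs => hrep _ (hu s hs) x hx)
      (hrep _ (hu t ht) x hx)
    exact (uniqueDiffOn_Icc hT t ht).eq_deriv _ (hdu t ht x) h2
  refine ⟨fun t ht => (PiecewisePoly.sum Finset.univ
    fun i _ => (hφ i).const_mul (du t (y i))).congr (hrepd t ht), fun {j q} hq => ?_⟩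
  have h1 : ∀ t ∈ Set.Icc 0 T, inner2 xL xR (u t) q
      = ∑ i, u t (y i) * inner2 xL xR (φ i) q := fun t ht =>
    inner2_sum_left _ (ae_of_inside (hrep _ (hu t ht))) fun i => (hφ i).integrable_mul hq
  have h2 : ∀ t ∈ Set.Icc 0 T, inner2 xL xR (du t) q
      = ∑ i, du t (y i) * inner2 xL xR (φ i) q := fun t ht =>
    inner2_sum_left _ (ae_of_inside (hrepd t ht)) fun i => (hφ i).integrable_mul hq
  constructor
  · intro t ht
    rw [h2 t ht]
    refine HasDerivWithinAt.congr ?_ h1 (h1 t ht)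
    exact HasDerivWithinAt.fun_sum fun i _ => (hdu t ht (y i)).mul_const _
  · refine ContinuousOn.congr ?_ h2
    exact continuousOn_finsetSum _ fun i _ => (hc (y i)).mul continuousOn_const

/-- The moments of the elementwise spatial derivative depend continuously on time. -/
lemma moments_dx_continuousOn (M : Mesh xL xR) {k : ℕ} {S : Set ℝ} {u dxu : ℝ → ℝ → ℝ}
    (hu : ∀ t ∈ S, M.PiecewisePoly k (u t)) (hdx : ∀ t ∈ S, M.PiecewiseDeriv (u t) (dxu t))
    (hc : ∀ x, ContinuousOn (fun t => u t x) S)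
    {j : ℕ} {q : ℝ → ℝ} (hq : M.PiecewisePoly j q) :
    ContinuousOn (fun t => inner2 xL xR (dxu t) q) S := by
  obtain ⟨y, φ, φ', -, hφ, hφ', hrep⟩ := M.exists_nodal k
  have h2 : ∀ t ∈ S, inner2 xL xR (dxu t) q
      = ∑ i, u t (y i) * inner2 xL xR (φ' i) q := fun t ht =>
    inner2_sum_left _
      (ae_of_inside ((hdx t ht).unique (PiecewiseDeriv.sum hφ') (hrep _ (hu t ht))))
      fun i => ((hφ i).deriv (hφ' i)).integrable_mul hq
  refine ContinuousOn.congr ?_ h2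
  exact continuousOn_finsetSum _ fun i _ => (hc (y i)).mul continuousOn_const

lemma inner2_add_right {M : Mesh xL xR} {i j : ℕ} {u v w : ℝ → ℝ} (hu : M.PiecewisePoly i u)
    (hv : M.PiecewisePoly j v) (hw : M.PiecewisePoly j w) :
    inner2 xL xR u (fun x => v x + w x) = inner2 xL xR u v + inner2 xL xR u w := by
  simp only [M.inner2_eq, mul_add]
  exact integral_add (hu.integrable_mul hv) (hu.integrable_mul hw)

lemma inner2_const_mul_left (c : ℝ) (v w : ℝ → ℝ) :
    inner2 xL xR (fun x => c * v x) w = c * inner2 xL xR v w := by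
  simp only [inner2, mul_assoc, intervalIntegral.integral_const_mul]

/-- Integration by parts for continuous piecewise polynomials, one of which vanishes at the
boundary. -/
lemma integration_by_parts (M : Mesh xL xR) {k : ℕ} {p m dp dm : ℝ → ℝ}
    (hp : M.PiecewisePoly k p) (hm : M.PiecewisePoly k m)
    (hpc : ContinuousOn p (Set.Icc xL xR)) (hmc : ContinuousOn m (Set.Icc xL xR))
    (hdp : M.PiecewiseDeriv p dp) (hdm : M.PiecewiseDeriv m dm)
    (hL : p xL = 0) (hR : p xR = 0) :
    inner2 xL xR dm p + inner2 xL xR dp m = 0 := by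
  have i1 := (hm.deriv hdm).integrable_mul hp
  have i2 := (hp.deriv hdp).integrable_mul hm
  have hI : IntervalIntegrable (fun x => dp x * m x + p x * dm x) volume xL xR := by
    rw [intervalIntegrable_iff_integrableOn_Ioc_of_le M.xL_lt_xR.le]
    simp only [mul_comm (p _) (dm _)]
    exact i2.add i1
  have h := integral_eq_of_hasDerivAt_off_countable_of_le (fun x => p x * m x)
    (fun x => dp x * m x + p x * dm x) M.xL_lt_xR.le (Set.countable_range M.pt)
    (hpc.mul hmc) (fun x hx => ?_) hI
  · rw [hL, hR, zero_mul, zero_mul, sub_zero] at h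
    rw [← h, intervalIntegral.integral_of_le M.xL_lt_xR.le, M.inner2_eq, M.inner2_eq, add_comm]
    simp only [mul_comm (p _) (dm _)]
    exact (integral_add i2 i1).symm
  · obtain ⟨n, hn, hxn⟩ := (M.mem_inside_or (Set.Ioo_subset_Ioc_self hx.1)).resolve_right hx.2
    exact (hdp n hn x hxn).mul (hdm n hn x hxn)

lemma L2norm_sq (M : Mesh xL xR) (v : ℝ → ℝ) : L2norm xL xR v ^ 2 = inner2 xL xR v v := by
  rw [L2norm, Real.sq_sqrt]
  · simp only [inner2, sq]
  · exact intervalIntegral.integral_nonneg M.xL_lt_xR.le fun x _ => sq_nonneg _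

/-- Polarized Parseval identity: only `v` needs to equal its Fourier expansion. -/
lemma parseval {M : Mesh xL xR} {r : ℕ} {e : Fin r → ℝ → ℝ} {v w : ℝ → ℝ}
    (hv : v =ᵐ[M.μ] fun x => ∑ i, inner2 xL xR v (e i) * e i x)
    (hi : ∀ i, Integrable (fun x => w x * e i x) M.μ) :
    inner2 xL xR w v = ∑ i, inner2 xL xR w (e i) * inner2 xL xR v (e i) := by
  rw [inner2_comm, inner2_sum_left _ hv fun i => by simpa only [mul_comm] using hi i]
  exact Finset.sum_congr rfl fun i _ => by rw [inner2_comm (e i) w, mul_comm]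

end Mesh

/-- **Discrete stability estimate (Lemma 1).** There is an absolute constant `C`
(independent of `T`, `a`, `b`, `d`, `f`, `g`, the mesh, and the solution) such that every
semidiscrete solution `(p_h, m_h)` of the inexact Petrov--Galerkin method satisfies, for
all `0 ≤ t ≤ T`,
`a ‖π p_h(t)‖² + b ‖π m_h(t)‖² ≤ C (1+T) (a ‖π p_h(0)‖² + b ‖π m_h(0)‖²
  + ∫_0^t (1/a) ‖π f(s)‖² + (1/b) ‖π g(s)‖² ds)` where `π = π_h^{k-1}`. -/
theorem discrete_stability_estimate :
    ∃ C : ℝ, 0 < C ∧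
      ∀ (xL xR : ℝ), xL < xR →
      ∀ (k : ℕ), 1 ≤ k →
      ∀ (M : Mesh xL xR) (T a b : ℝ) (d : ℝ → ℝ) (d_min d_max : ℝ)
        (f g : ℝ → ℝ → ℝ),
        0 < T → 0 < a → 0 < b → 0 < d_min →
        (∀ᵐ x ∂(volume.restrict (Set.Ioo xL xR)), d_min ≤ d x ∧ d x ≤ d_max) →
        (∀ x, ContinuousOn (fun t => f t x) (Set.Icc (0 : ℝ) T)) →
        (∀ x, ContinuousOn (fun t => g t x) (Set.Icc (0 : ℝ) T)) →
      ∀ (sol : PGSol M k T a b d f g)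
        (Pp Pm Pf Pg : ℝ → ℝ → ℝ),
        (∀ t ∈ Set.Icc (0 : ℝ) T, IsL2Proj M (k - 1) (sol.p t) (Pp t)) →
        (∀ t ∈ Set.Icc (0 : ℝ) T, IsL2Proj M (k - 1) (sol.m t) (Pm t)) →
        (∀ t ∈ Set.Icc (0 : ℝ) T, IsL2Proj M (k - 1) (f t) (Pf t)) →
        (∀ t ∈ Set.Icc (0 : ℝ) T, IsL2Proj M (k - 1) (g t) (Pg t)) →
      ∀ t ∈ Set.Icc (0 : ℝ) T,
        a * (L2norm xL xR (Pp t)) ^ 2 + b * (L2norm xL xR (Pm t)) ^ 2 ≤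
          C * (1 + T) *
            (a * (L2norm xL xR (Pp 0)) ^ 2 + b * (L2norm xL xR (Pm 0)) ^ 2 +
              ∫ s in (0 : ℝ)..t,
                ((1 / a) * (L2norm xL xR (Pf s)) ^ 2 +
                  (1 / b) * (L2norm xL xR (Pg s)) ^ 2)) := by
  refine ⟨Real.exp 1, Real.exp_pos 1, ?_⟩
  intro xL xR _ k _ M T a b d d_min d_max f g hT ha hb hdmin hd _ _ sol Pp Pm Pf Pg
    hPp hPm hPf hPg t ht
  obtain ⟨r, e, he, hexp⟩ := M.exists_fourier (k - 1)
  obtain ⟨d', hd'top, hd'0, hd'⟩ := M.exists_regular_coeff hdmin hd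
  obtain ⟨hdtp, hPder⟩ := M.moments_hasDeriv hT sol.p_poly sol.dtp_spec sol.dtp_cont
  obtain ⟨hdtm, hMder⟩ := M.moments_hasDeriv hT sol.m_poly sol.dtm_spec sol.dtm_cont
  have hpc : ∀ x, ContinuousOn (fun s => sol.p s x) (Set.Icc 0 T) :=
    fun x s hs => (sol.dtp_spec s hs x).continuousWithinAt
  have hmc : ∀ x, ContinuousOn (fun s => sol.m s x) (Set.Icc 0 T) :=
    fun x s hs => (sol.dtm_spec s hs x).continuousWithinAt
  have hdxp : ∀ s ∈ Set.Icc 0 T, M.PiecewisePoly (k - 1) (sol.dxp s) :=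
    fun s hs => (sol.p_poly s hs).deriv (sol.dxp_spec s hs)
  have hdxm : ∀ s ∈ Set.Icc 0 T, M.PiecewisePoly (k - 1) (sol.dxm s) :=
    fun s hs => (sol.m_poly s hs).deriv (sol.dxm_spec s hs)
  -- products with the regularized friction coefficient are integrable
  have hd'int : ∀ {i j : ℕ} {v w : ℝ → ℝ}, M.PiecewisePoly i v → M.PiecewisePoly j w →
      Integrable (fun x => d' x * v x * w x) M.μ := by
    intro i j v w hv hw
    exact ((hd'top.mul (hv.mul hw).memLp_top (r := ⊤)).integrable le_top).congr
      (Filter.Eventually.of_forall fun x => by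
        simp only [Pi.mul_apply]; ring)
  -- the equations tested with the basis functions
  have hF : ∀ s ∈ Set.Icc 0 T, ∀ i, inner2 xL xR (Pf s) (e i) =
      a * inner2 xL xR (sol.dtp s) (e i) + inner2 xL xR (sol.dxm s) (e i) := by
    intro s hs i
    rw [(hPf s hs).2 _ (he i), ← sol.eq1 s hs _ (he i), Mesh.inner2_const_mul_left]
  have hfric : ∀ s ∈ Set.Icc 0 T, ∀ v, M.PiecewisePoly (k - 1) v →
      inner2 xL xR (fun x => d x * sol.pim s x) v =
        inner2 xL xR (fun x => d' x * sol.pim s x) v := by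
    intro s hs
    refine hd' (k - 1) _ (sol.pim_spec s hs).1 fun v w hv hw => ?_
    have h1 := sol.eq2 s hs v hv
    have h2 := sol.eq2 s hs w hw
    have h3 := sol.eq2 s hs _ (hv.add hw)
    rw [Mesh.inner2_const_mul_left, ← (hPg s hs).2 _ hv] at h1
    rw [Mesh.inner2_const_mul_left, ← (hPg s hs).2 _ hw] at h2
    rw [Mesh.inner2_const_mul_left, ← (hPg s hs).2 _ (hv.add hw),
      Mesh.inner2_add_right (hdtm s hs) hv hw, Mesh.inner2_add_right (hdxp s hs) hv hw,
      Mesh.inner2_add_right (hPg s hs).1 hv hw] at h3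
    linarith
  have hG : ∀ s ∈ Set.Icc 0 T, ∀ i, inner2 xL xR (Pg s) (e i) =
      b * inner2 xL xR (sol.dtm s) (e i) + inner2 xL xR (sol.dxp s) (e i) +
        inner2 xL xR (fun x => d' x * sol.pim s x) (e i) := by
    intro s hs i
    rw [(hPg s hs).2 _ (he i), ← sol.eq2 s hs _ (he i), Mesh.inner2_const_mul_left,
      hfric s hs _ (he i)]
  -- Fourier expansion of the projection of `m_h`
  have hpim : ∀ s ∈ Set.Icc 0 T, sol.pim s =ᵐ[M.μ]
      fun x => ∑ i, inner2 xL xR (sol.m s) (e i) * e i x := by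
    intro s hs
    have h := hexp _ (sol.pim_spec s hs).1
    simp only [fun i => (sol.pim_spec s hs).2 _ (he i)] at h
    exact h
  have hDc : ∀ i, ContinuousOn
      (fun s => inner2 xL xR (fun x => d' x * sol.pim s x) (e i)) (Set.Icc 0 T) := by
    intro i
    have h : ∀ s ∈ Set.Icc 0 T, inner2 xL xR (fun x => d' x * sol.pim s x) (e i) =
        ∑ l, inner2 xL xR (sol.m s) (e l) * inner2 xL xR (fun x => d' x * e l x) (e i) := by
      intro s hs
      refine Mesh.inner2_sum_left (M := M) _ ?_ fun l => hd'int (he l) (he i)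
      filter_upwards [hpim s hs] with x hx
      rw [hx, Finset.mul_sum]
      exact Finset.sum_congr rfl fun l _ => by ring
    refine ContinuousOn.congr ?_ h
    exact continuousOn_finsetSum _ fun l _ =>
      ContinuousOn.mul (fun s hs => ((hMder (he l)).1 s hs).continuousWithinAt) continuousOn_const
  have hFc : ∀ i, ContinuousOn (fun s => inner2 xL xR (Pf s) (e i)) (Set.Icc 0 T) := fun i =>
    ((continuousOn_const.mul (hPder (he i)).2).add
      (M.moments_dx_continuousOn sol.m_poly sol.dxm_spec hmc (he i))).congr
        fun s hs => hF s hs i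
  have hGc : ∀ i, ContinuousOn (fun s => inner2 xL xR (Pg s) (e i)) (Set.Icc 0 T) := fun i =>
    (((continuousOn_const.mul (hMder (he i)).2).add
      (M.moments_dx_continuousOn sol.p_poly sol.dxp_spec hpc (he i))).add (hDc i)).congr
        fun s hs => hG s hs i
  have hnorm : ∀ v, M.PiecewisePoly (k - 1) v →
      L2norm xL xR v ^ 2 = ∑ i, inner2 xL xR v (e i) ^ 2 := by
    intro v hv
    rw [M.L2norm_sq, Mesh.parseval (hexp v hv) fun i => hv.integrable_mul (he i)]
    simp only [sq]
  -- the spatial coupling terms cancel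
  have hcouple : ∀ s ∈ Set.Icc 0 T,
      ∑ i, inner2 xL xR (sol.p s) (e i) * inner2 xL xR (sol.dxm s) (e i) +
        ∑ i, inner2 xL xR (sol.m s) (e i) * inner2 xL xR (sol.dxp s) (e i) = 0 := by
    intro s hs
    rw [← Mesh.parseval (hexp _ (hdxm s hs)) fun i => (sol.p_poly s hs).integrable_mul (he i),
      ← Mesh.parseval (hexp _ (hdxp s hs)) fun i => (sol.m_poly s hs).integrable_mul (he i),
      Mesh.inner2_comm (sol.p s), Mesh.inner2_comm (sol.m s)]
    exact M.integration_by_parts (sol.p_poly s hs) (sol.m_poly s hs) (sol.p_cont s hs)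
      (sol.m_cont s hs) (sol.dxp_spec s hs) (sol.dxm_spec s hs) (sol.p_bcL s hs) (sol.p_bcR s hs)
  -- friction dissipates
  have hdiss : ∀ s ∈ Set.Icc 0 T, 0 ≤ ∑ i,
      inner2 xL xR (fun x => d' x * sol.pim s x) (e i) * inner2 xL xR (sol.m s) (e i) := by
    intro s hs
    have hp := (sol.pim_spec s hs).1
    have h := Mesh.parseval (hexp _ hp) fun i => hd'int hp (he i)
    simp only [fun i => (sol.pim_spec s hs).2 _ (he i)] at h
    rw [← h, M.inner2_eq]
    refine integral_nonneg_of_ae ?_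
    filter_upwards [hd'0] with x hx
    simp only [Pi.zero_apply, mul_assoc]
    exact mul_nonneg hx (mul_self_nonneg _)
  let E : ℝ → ℝ := fun s => a * ∑ i, inner2 xL xR (sol.p s) (e i) ^ 2 +
    b * ∑ i, inner2 xL xR (sol.m s) (e i) ^ 2
  let F : ℝ → ℝ := fun s => 1 / a * ∑ i, inner2 xL xR (Pf s) (e i) ^ 2 +
    1 / b * ∑ i, inner2 xL xR (Pg s) (e i) ^ 2
  have hEnorm : ∀ s ∈ Set.Icc 0 T,
      a * L2norm xL xR (Pp s) ^ 2 + b * L2norm xL xR (Pm s) ^ 2 = E s := by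
    intro s hs
    rw [hnorm _ (hPp s hs).1, hnorm _ (hPm s hs).1]
    simp only [fun i => (hPp s hs).2 _ (he i), fun i => (hPm s hs).2 _ (he i), E]
  have hFnorm : ∀ s ∈ Set.Icc 0 T,
      1 / a * L2norm xL xR (Pf s) ^ 2 + 1 / b * L2norm xL xR (Pg s) ^ 2 = F s := by
    intro s hs
    rw [hnorm _ (hPf s hs).1, hnorm _ (hPg s hs).1]
  have h0 : (0 : ℝ) ∈ Set.Icc 0 T := ⟨le_rfl, hT.le⟩
  have hF0 : ∀ s, 0 ≤ F s := fun s => by positivity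
  have hE0 : 0 ≤ E 0 := by positivity
  have hFcont : ContinuousOn F (Set.Icc 0 T) :=
    (continuousOn_const.mul (continuousOn_finsetSum _ fun i _ => (hFc i).pow 2)).add
      (continuousOn_const.mul (continuousOn_finsetSum _ fun i _ => (hGc i).pow 2))
  have hEder : ∀ s ∈ Set.Icc 0 T, HasDerivWithinAt E
      (a * ∑ i, 2 * inner2 xL xR (sol.p s) (e i) * inner2 xL xR (sol.dtp s) (e i) +
        b * ∑ i, 2 * inner2 xL xR (sol.m s) (e i) * inner2 xL xR (sol.dtm s) (e i))
      (Set.Icc 0 T) s := by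
    intro s hs
    refine ((HasDerivWithinAt.fun_sum fun i _ => ?_).const_mul a).add
      ((HasDerivWithinAt.fun_sum fun i _ => ?_).const_mul b)
    · simpa using ((hPder (he i)).1 s hs).fun_pow 2
    · simpa using ((hMder (he i)).1 s hs).fun_pow 2
  have hEle : ∀ s ∈ Set.Icc 0 T,
      a * ∑ i, 2 * inner2 xL xR (sol.p s) (e i) * inner2 xL xR (sol.dtp s) (e i) +
        b * ∑ i, 2 * inner2 xL xR (sol.m s) (e i) * inner2 xL xR (sol.dtm s) (e i)
      ≤ T * F s + E s / T := by
    intro s hs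
    have hc := hcouple s hs
    have hdi := hdiss s hs
    -- Young's inequality with weight `T`
    have young : ∀ c : ℝ, 0 < c → ∀ x y : ℝ, 2 * x * y ≤ T * (1 / c * y ^ 2) + c * x ^ 2 / T := by
      intro c hc x y
      have h : T * (1 / c * y ^ 2) + c * x ^ 2 / T - 2 * x * y = (T * y - c * x) ^ 2 / (c * T) := by
        field_simp
        ring
      have : 0 ≤ (T * y - c * x) ^ 2 / (c * T) := by positivity
      linarith
    have e1 : a * ∑ i, 2 * inner2 xL xR (sol.p s) (e i) * inner2 xL xR (sol.dtp s) (e i) =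
        ∑ i, 2 * inner2 xL xR (sol.p s) (e i) * inner2 xL xR (Pf s) (e i) -
        2 * ∑ i, inner2 xL xR (sol.p s) (e i) * inner2 xL xR (sol.dxm s) (e i) := by
      rw [Finset.mul_sum, Finset.mul_sum, ← Finset.sum_sub_distrib]
      exact Finset.sum_congr rfl fun i _ => by rw [hF s hs i]; ring
    have e2 : b * ∑ i, 2 * inner2 xL xR (sol.m s) (e i) * inner2 xL xR (sol.dtm s) (e i) =
        ∑ i, 2 * inner2 xL xR (sol.m s) (e i) * inner2 xL xR (Pg s) (e i) -
        2 * ∑ i, inner2 xL xR (sol.m s) (e i) * inner2 xL xR (sol.dxp s) (e i) -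
        2 * ∑ i, inner2 xL xR (fun x => d' x * sol.pim s x) (e i) *
          inner2 xL xR (sol.m s) (e i) := by
      rw [Finset.mul_sum, Finset.mul_sum, Finset.mul_sum, ← Finset.sum_sub_distrib,
        ← Finset.sum_sub_distrib]
      exact Finset.sum_congr rfl fun i _ => by rw [hG s hs i]; ring
    have y1 := Finset.sum_le_sum fun i (_ : i ∈ Finset.univ) =>
      young a ha (inner2 xL xR (sol.p s) (e i)) (inner2 xL xR (Pf s) (e i))
    have y2 := Finset.sum_le_sum fun i (_ : i ∈ Finset.univ) =>
      young b hb (inner2 xL xR (sol.m s) (e i)) (inner2 xL xR (Pg s) (e i))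
    have e3 : T * F s + E s / T =
        ∑ i, (T * (1 / a * inner2 xL xR (Pf s) (e i) ^ 2) +
          a * inner2 xL xR (sol.p s) (e i) ^ 2 / T) +
        ∑ i, (T * (1 / b * inner2 xL xR (Pg s) (e i) ^ 2) +
          b * inner2 xL xR (sol.m s) (e i) ^ 2 / T) := by
      simp only [F, E, Finset.sum_add_distrib, ← Finset.mul_sum, ← Finset.sum_div]
      ring
    rw [e1, e2, e3]
    linarith
  have hmain := gronwall_step hT hEder hFcont hF0 hE0 hEle ht
  have hint : ∫ s in (0 : ℝ)..t, ((1 / a) * (L2norm xL xR (Pf s)) ^ 2 +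
      (1 / b) * (L2norm xL xR (Pg s)) ^ 2) = ∫ s in (0 : ℝ)..t, F s := by
    refine intervalIntegral.integral_congr fun s hs => ?_
    rw [Set.uIcc_of_le ht.1] at hs
    exact hFnorm s ⟨hs.1, hs.2.trans ht.2⟩
  have hI : 0 ≤ ∫ s in (0 : ℝ)..t, F s := intervalIntegral.integral_nonneg ht.1 fun s _ => hF0 s
  rw [hEnorm t ht, hEnorm 0 h0, hint]
  refine hmain.trans ?_
  rw [mul_assoc]
  refine mul_le_mul_of_nonneg_left ?_ (Real.exp_pos 1).le
  nlinarith [mul_nonneg hT.le hE0]
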